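/- arXiv:1402.6279 — 2 statements merged into one kernel-verified Lean document; each statement's English description precedes it below -/
import Mathlib

section
/- For every t ∈ ℂ and every integer k ≥ 1: ∂((Θ + tθ²)^k) = [(Θ + tθ²)^k, θ] and ∂̄((Θ + tθ²)^k) = t[(Θ + tθ²)^k, θ]. -/
/-- An abstract model of the Dolbeault double complex of `(p,q)`-forms on a complex
manifold: a bigraded associative `ℂ`-algebra `Ω = ⨁ Ω^{p,q}`, graded-commutative with
respect to total degree, with `ℂ`-linear operators `∂` (`pd`) and `∂̄` (`pdb`) of
bidegrees `(1,0)` and `(0,1)`, squaring to zero and anticommuting, satisfying the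
graded Leibniz rule. -/
structure DolbeaultAlgebra (Ω : Type*) [Ring Ω] [Algebra ℂ Ω] where
  /-- the `ℂ`-subspace of elements of bidegree `(p,q)` -/
  deg : ℕ → ℕ → Submodule ℂ Ω
  one_mem : (1 : Ω) ∈ deg 0 0
  mul_mem : ∀ {p q p' q'} {a b : Ω}, a ∈ deg p q → b ∈ deg p' q' →
    a * b ∈ deg (p + p') (q + q')
  gcomm : ∀ {p q p' q'} (a b : Ω), a ∈ deg p q → b ∈ deg p' q' →
    a * b = ((-1 : ℂ) ^ ((p + q) * (p' + q'))) • (b * a)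
  /-- the operator `∂` -/
  pd : Ω →ₗ[ℂ] Ω
  /-- the operator `∂̄` -/
  pdb : Ω →ₗ[ℂ] Ω
  pd_mem : ∀ {p q} {a : Ω}, a ∈ deg p q → pd a ∈ deg (p + 1) q
  pdb_mem : ∀ {p q} {a : Ω}, a ∈ deg p q → pdb a ∈ deg p (q + 1)
  pd_pd : ∀ a : Ω, pd (pd a) = 0
  pdb_pdb : ∀ a : Ω, pdb (pdb a) = 0
  pd_pdb : ∀ a : Ω, pd (pdb a) + pdb (pd a) = 0
  pd_leibniz : ∀ {p q} (a b : Ω), a ∈ deg p q →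
    pd (a * b) = pd a * b + ((-1 : ℂ) ^ (p + q)) • (a * pd b)
  pdb_leibniz : ∀ {p q} (a b : Ω), a ∈ deg p q →
    pdb (a * b) = pdb a * b + ((-1 : ℂ) ^ (p + q)) • (a * pdb b)

namespace DolbeaultAlgebra

variable {Ω : Type*} [Ring Ω] [Algebra ℂ Ω] {r : ℕ}

/-- the entrywise extension of `∂` to `r × r` matrices over `Ω` -/
def mpd (A : DolbeaultAlgebra Ω) (M : Matrix (Fin r) (Fin r) Ω) :
    Matrix (Fin r) (Fin r) Ω := M.map A.pd

/-- the entrywise extension of `∂̄` to `r × r` matrices over `Ω` -/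
def mpdb (A : DolbeaultAlgebra Ω) (M : Matrix (Fin r) (Fin r) Ω) :
    Matrix (Fin r) (Fin r) Ω := M.map A.pdb

/-- the assertion that all entries of a matrix lie in `Ω^{p,q}` -/
def MatDeg (A : DolbeaultAlgebra Ω) (p q : ℕ) (M : Matrix (Fin r) (Fin r) Ω) : Prop :=
  ∀ i j, M i j ∈ A.deg p q

end DolbeaultAlgebra

variable {Ω : Type*} [Ring Ω] [Algebra ℂ Ω]

namespace DolbeaultAlgebra

variable {r : ℕ}

theorem mpd_add' (A : DolbeaultAlgebra Ω) (M N : Matrix (Fin r) (Fin r) Ω) :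
    A.mpd (M + N) = A.mpd M + A.mpd N := by
  ext i j; simp [mpd]

theorem mpdb_add' (A : DolbeaultAlgebra Ω) (M N : Matrix (Fin r) (Fin r) Ω) :
    A.mpdb (M + N) = A.mpdb M + A.mpdb N := by
  ext i j; simp [mpdb]

theorem mpd_smul' (A : DolbeaultAlgebra Ω) (t : ℂ) (M : Matrix (Fin r) (Fin r) Ω) :
    A.mpd (t • M) = t • A.mpd M := by
  ext i j; simp [mpd]

theorem mpdb_smul' (A : DolbeaultAlgebra Ω) (t : ℂ) (M : Matrix (Fin r) (Fin r) Ω) :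
    A.mpdb (t • M) = t • A.mpdb M := by
  ext i j; simp [mpdb]

theorem mpdb_neg' (A : DolbeaultAlgebra Ω) (M : Matrix (Fin r) (Fin r) Ω) :
    A.mpdb (-M) = -A.mpdb M := by
  ext i j; simp [mpdb]

theorem mpd_mul' (A : DolbeaultAlgebra Ω) {p q : ℕ} (M N : Matrix (Fin r) (Fin r) Ω)
    (h : A.MatDeg p q M) :
    A.mpd (M * N) = A.mpd M * N + ((-1 : ℂ) ^ (p + q)) • (M * A.mpd N) := by
  ext i j
  simp only [mpd, Matrix.map_apply, Matrix.mul_apply, Matrix.add_apply, Matrix.smul_apply,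
    map_sum, Finset.smul_sum, ← Finset.sum_add_distrib]
  exact Finset.sum_congr rfl fun l _ => A.pd_leibniz _ _ (h i l)

theorem mpdb_mul' (A : DolbeaultAlgebra Ω) {p q : ℕ} (M N : Matrix (Fin r) (Fin r) Ω)
    (h : A.MatDeg p q M) :
    A.mpdb (M * N) = A.mpdb M * N + ((-1 : ℂ) ^ (p + q)) • (M * A.mpdb N) := by
  ext i j
  simp only [mpdb, Matrix.map_apply, Matrix.mul_apply, Matrix.add_apply, Matrix.smul_apply,
    map_sum, Finset.smul_sum, ← Finset.sum_add_distrib]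
  exact Finset.sum_congr rfl fun l _ => A.pdb_leibniz _ _ (h i l)

theorem matDeg_mul' (A : DolbeaultAlgebra Ω) {p q p' q' : ℕ}
    (M N : Matrix (Fin r) (Fin r) Ω) (h : A.MatDeg p q M) (h' : A.MatDeg p' q' N) :
    A.MatDeg (p + p') (q + q') (M * N) := by
  intro i j
  rw [Matrix.mul_apply]
  exact Submodule.sum_mem _ fun l _ => A.mul_mem (h i l) (h' l j)

end DolbeaultAlgebra

/-- For every `t ∈ ℂ` and every `k ≥ 1`:
`∂((Θ + tθ²)ᵏ) = [(Θ + tθ²)ᵏ, θ]` and `∂̄((Θ + tθ²)ᵏ) = t[(Θ + tθ²)ᵏ, θ]`. -/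
theorem stmt3
    (A : DolbeaultAlgebra Ω) (r : ℕ) (hr : 1 ≤ r)
    (θ Θ : Matrix (Fin r) (Fin r) Ω)
    (hθdeg : A.MatDeg 1 0 θ) (hθpd : A.mpd θ = -(θ * θ)) (hΘ : Θ = A.mpdb θ)
    (t : ℂ) (k : ℕ) (hk : 1 ≤ k) :
    A.mpd ((Θ + t • (θ * θ)) ^ k) =
      (Θ + t • (θ * θ)) ^ k * θ - θ * (Θ + t • (θ * θ)) ^ k ∧
    A.mpdb ((Θ + t • (θ * θ)) ^ k) =
      t • ((Θ + t • (θ * θ)) ^ k * θ - θ * (Θ + t • (θ * θ)) ^ k) := by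
  have hΘdeg : A.MatDeg 1 1 Θ := by
    rw [hΘ]; exact fun i j => A.pdb_mem (hθdeg i j)
  have hsq := A.matDeg_mul' θ θ hθdeg hθdeg
  have hbsq : A.mpdb (θ * θ) = Θ * θ - θ * Θ := by
    rw [A.mpdb_mul' θ θ hθdeg, ← hΘ]; simp [sub_eq_add_neg]
  have hdsq : A.mpd (θ * θ) = 0 := by
    rw [A.mpd_mul' θ θ hθdeg, hθpd]; simp [mul_assoc]
  have hdΘ : A.mpd Θ = Θ * θ - θ * Θ := by
    have h : A.mpd (A.mpdb θ) + A.mpdb (A.mpd θ) = 0 := by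
      ext i j; exact A.pd_pdb _
    rw [hθpd, A.mpdb_neg', hbsq, ← hΘ] at h
    exact add_neg_eq_zero.mp h
  have hbΘ : A.mpdb Θ = 0 := by
    rw [hΘ]; ext i j; exact A.pdb_pdb _
  obtain ⟨M, hM⟩ : ∃ M, M = Θ + t • (θ * θ) := ⟨_, rfl⟩
  rw [← hM]
  have hcomm : M * θ - θ * M = Θ * θ - θ * Θ := by
    rw [hM, add_mul, mul_add, smul_mul_assoc, mul_smul_comm, mul_assoc]; abel
  have hdM : A.mpd M = M * θ - θ * M := by
    rw [hcomm, hM, A.mpd_add', A.mpd_smul', hdsq, hdΘ]; simp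
  have hbM : A.mpdb M = t • (M * θ - θ * M) := by
    rw [hcomm, hM, A.mpdb_add', A.mpdb_smul', hbsq, hbΘ]; simp
  have hdmul : ∀ N, A.mpd (M * N) = A.mpd M * N + M * A.mpd N := by
    intro N
    rw [hM, add_mul, smul_mul_assoc, A.mpd_add', A.mpd_smul', A.mpd_mul' Θ N hΘdeg,
      A.mpd_mul' (θ * θ) N hsq, A.mpd_add', A.mpd_smul']
    norm_num [add_mul, smul_add, smul_mul_assoc]
    abel
  have hbmul : ∀ N, A.mpdb (M * N) = A.mpdb M * N + M * A.mpdb N := by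
    intro N
    rw [hM, add_mul, smul_mul_assoc, A.mpdb_add', A.mpdb_smul', A.mpdb_mul' Θ N hΘdeg,
      A.mpdb_mul' (θ * θ) N hsq, A.mpdb_add', A.mpdb_smul']
    norm_num [add_mul, smul_add, smul_mul_assoc]
    abel
  clear hM hcomm
  induction k, hk using Nat.le_induction with
  | base => simpa using ⟨hdM, hbM⟩
  | succ n hn ih =>
    obtain ⟨ih1, ih2⟩ := ih
    have key : (M * θ - θ * M) * M ^ n + M * (M ^ n * θ - θ * M ^ n)
        = M * M ^ n * θ - θ * (M * M ^ n) := by noncomm_ring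
    rw [pow_succ', hdmul, hbmul, ih1, ih2, hdM, hbM, smul_mul_assoc, mul_smul_comm,
      ← smul_add, key]
    exact ⟨rfl, rfl⟩
end

section
/- Fix an integer k ≥ 1 and for 0 ≤ l ≤ k−1 let a_l ∈ Ω be the coefficient of t^l in the expansion Tr(θ(Θ + tθ²)^{k−1}) = Σ_{l=0}^{k−1} a_l t^l, i.e. a_l is the sum of Tr(θ X₁⋯X_{k−1}) over all words X₁,…,X_{k−1} in which exactly l of the letters equal θ² and the remaining k−1−l letters equal Θ. Then ∂̄a₀ = Tr(Θ^k), ∂̄a_l = ((k+l)/l) ∂a_{l−1} for every 1 ≤ l ≤ k−1, and ∂a_{k−1} = 0. -/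
namespace DolbeaultAlgebra

variable {Ω : Type*} [Ring Ω] [Algebra ℂ Ω] {r : ℕ}

/-- the subalgebra generated by the homogeneous elements of even total degree -/
def evenSub (A : DolbeaultAlgebra Ω) : Subalgebra ℂ Ω :=
  Algebra.adjoin ℂ {a | ∃ p q, Even (p + q) ∧ a ∈ A.deg p q}

/-- matrices with even entries -/
def EvMat (A : DolbeaultAlgebra Ω) (N : Matrix (Fin r) (Fin r) Ω) : Prop :=
  ∀ i j, N i j ∈ A.evenSub

lemma even_comm_hom (A : DolbeaultAlgebra Ω) {a b : Ω} {p q : ℕ} (ha : a ∈ A.evenSub)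
    (hb : b ∈ A.deg p q) : a * b = b * a := by
  unfold evenSub at ha
  induction ha using Algebra.adjoin_induction with
  | mem x hx =>
    obtain ⟨p', q', he, hx⟩ := hx
    rw [A.gcomm x b hx hb, Even.neg_one_pow (he.mul_right _), one_smul]
  | algebraMap c => exact Algebra.commutes c b
  | add x y _ _ hx hy => rw [add_mul, mul_add, hx, hy]
  | mul x y _ _ hx hy => rw [mul_assoc, hy, ← mul_assoc, hx, mul_assoc]

lemma even_comm (A : DolbeaultAlgebra Ω) {a b : Ω} (ha : a ∈ A.evenSub)
    (hb : b ∈ A.evenSub) : a * b = b * a := by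
  unfold evenSub at hb
  induction hb using Algebra.adjoin_induction with
  | mem x hx =>
    obtain ⟨p', q', he, hx⟩ := hx
    exact A.even_comm_hom ha hx
  | algebraMap c => exact (Algebra.commutes c a).symm
  | add x y _ _ hx hy => rw [add_mul, mul_add, hx, hy]
  | mul x y _ _ hx hy => rw [← mul_assoc, hx, mul_assoc, hy, mul_assoc]

/-- the graded Leibniz rule -/
def Leib (A : DolbeaultAlgebra Ω) (D : Ω →ₗ[ℂ] Ω) : Prop :=
  ∀ (p q : ℕ) (a b : Ω), a ∈ A.deg p q → D (a * b) = D a * b + ((-1 : ℂ) ^ (p + q)) • (a * D b)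

lemma Leib.one {A : DolbeaultAlgebra Ω} {D : Ω →ₗ[ℂ] Ω} (hD : A.Leib D) : D 1 = 0 := by
  have := hD 0 0 1 1 A.one_mem
  simpa using this

lemma Leib.even {A : DolbeaultAlgebra Ω} {D : Ω →ₗ[ℂ] Ω} (hD : A.Leib D) {a : Ω}
    (ha : a ∈ A.evenSub) : ∀ b, D (a * b) = D a * b + a * D b := by
  unfold evenSub at ha
  induction ha using Algebra.adjoin_induction with
  | mem x hx =>
    obtain ⟨p', q', he, hx⟩ := hx
    intro b
    rw [hD p' q' x b hx, he.neg_one_pow, one_smul]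
  | algebraMap c =>
    intro b
    rw [Algebra.algebraMap_eq_smul_one]
    simp [hD.one]
  | add x y _ _ hx hy => intro b; rw [add_mul, map_add, hx, hy, map_add]; noncomm_ring
  | mul x y _ _ hx hy => intro b; rw [mul_assoc, hx, hy, hx]; noncomm_ring

lemma Leib.mat_even {A : DolbeaultAlgebra Ω} {D : Ω →ₗ[ℂ] Ω} (hD : A.Leib D)
    {N : Matrix (Fin r) (Fin r) Ω} (hN : A.EvMat N) (B : Matrix (Fin r) (Fin r) Ω) :
    (N * B).map D = N.map D * B + N * B.map D := by
  ext i j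
  simp only [Matrix.map_apply, Matrix.mul_apply, Matrix.add_apply, map_sum,
    ← Finset.sum_add_distrib]
  exact Finset.sum_congr rfl fun x _ => hD.even (hN i x) _

lemma Leib.mat_odd {A : DolbeaultAlgebra Ω} {D : Ω →ₗ[ℂ] Ω} (hD : A.Leib D)
    {θ : Matrix (Fin r) (Fin r) Ω} (hθ : A.MatDeg 1 0 θ) (B : Matrix (Fin r) (Fin r) Ω) :
    (θ * B).map D = θ.map D * B - θ * B.map D := by
  ext i j
  simp only [Matrix.map_apply, Matrix.mul_apply, Matrix.sub_apply, map_sum,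
    ← Finset.sum_sub_distrib]
  refine Finset.sum_congr rfl fun x _ => ?_
  rw [hD 1 0 _ _ (hθ i x)]
  simp [sub_eq_add_neg]

lemma EvMat.mul {A : DolbeaultAlgebra Ω} {M N : Matrix (Fin r) (Fin r) Ω}
    (hM : A.EvMat M) (hN : A.EvMat N) : A.EvMat (M * N) := by
  intro i j
  rw [Matrix.mul_apply]
  exact sum_mem fun x _ => A.evenSub.mul_mem (hM i x) (hN x j)

lemma EvMat.add {A : DolbeaultAlgebra Ω} {M N : Matrix (Fin r) (Fin r) Ω}
    (hM : A.EvMat M) (hN : A.EvMat N) : A.EvMat (M + N) :=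
  fun i j => add_mem (hM i j) (hN i j)

lemma EvMat.smul {A : DolbeaultAlgebra Ω} {M : Matrix (Fin r) (Fin r) Ω}
    (hM : A.EvMat M) (t : ℂ) : A.EvMat (t • M) :=
  fun i j => A.evenSub.smul_mem (hM i j) t

lemma EvMat.zero (A : DolbeaultAlgebra Ω) : A.EvMat (0 : Matrix (Fin r) (Fin r) Ω) :=
  fun _ _ => zero_mem _

lemma EvMat.one (A : DolbeaultAlgebra Ω) : A.EvMat (1 : Matrix (Fin r) (Fin r) Ω) := by
  intro i j
  rw [Matrix.one_apply]
  split_ifs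
  · exact A.evenSub.one_mem
  · exact zero_mem _

lemma EvMat.pow {A : DolbeaultAlgebra Ω} {M : Matrix (Fin r) (Fin r) Ω}
    (hM : A.EvMat M) (n : ℕ) : A.EvMat (M ^ n) := by
  induction n with
  | zero => rw [pow_zero]; exact EvMat.one A
  | succ n ih => rw [pow_succ]; exact ih.mul hM

lemma EvMat.trace_comm {A : DolbeaultAlgebra Ω} {M N : Matrix (Fin r) (Fin r) Ω}
    (hM : A.EvMat M) (hN : A.EvMat N) : (M * N).trace = (N * M).trace := by
  simp only [Matrix.trace, Matrix.diag_apply, Matrix.mul_apply]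
  rw [Finset.sum_comm]
  exact Finset.sum_congr rfl fun i _ => Finset.sum_congr rfl fun j _ =>
    A.even_comm (hM _ _) (hN _ _)

/-- odd cyclicity of the trace -/
lemma trace_odd (A : DolbeaultAlgebra Ω) {θ N : Matrix (Fin r) (Fin r) Ω}
    (hθ : A.MatDeg 1 0 θ) (hN : A.EvMat N) :
    (θ * (N * θ)).trace = -(θ * θ * N).trace := by
  rw [mul_assoc]
  simp only [Matrix.trace, Matrix.diag_apply, Matrix.mul_apply, Finset.mul_sum]
  have key : ∀ i j k, θ i j * (N j k * θ k i) = -(θ k i * (θ i j * N j k)) := by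
    intro i j k
    have h1 : θ i j * θ k i = -(θ k i * θ i j) := by
      rw [A.gcomm _ _ (hθ i j) (hθ k i)]; simp
    rw [A.even_comm_hom (hN j k) (hθ k i), ← mul_assoc, h1, neg_mul, mul_assoc]
  simp only [key, Finset.sum_neg_distrib, neg_inj]
  calc _ = ∑ i, ∑ k, ∑ j, θ k i * (θ i j * N j k) :=
        Finset.sum_congr rfl fun i _ => Finset.sum_comm
    _ = _ := Finset.sum_comm

/-- derivation of powers -/
lemma Leib.pow_comm {A : DolbeaultAlgebra Ω} {D : Ω →ₗ[ℂ] Ω} (hD : A.Leib D)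
    {X θ : Matrix (Fin r) (Fin r) Ω} (hX : A.EvMat X) (s : ℂ)
    (h : X.map D = s • (X * θ - θ * X)) (n : ℕ) :
    (X ^ n).map D = s • (X ^ n * θ - θ * X ^ n) := by
  induction n with
  | zero =>
    ext i j
    simp [Matrix.one_apply, apply_ite D, hD.one]
  | succ n ih =>
    rw [pow_succ, hD.mat_even (hX.pow n), ih, h, smul_mul_assoc, mul_smul_comm, ← smul_add]
    congr 1
    noncomm_ring

lemma trace_map (D : Ω →ₗ[ℂ] Ω) (M : Matrix (Fin r) (Fin r) Ω) :
    D M.trace = (M.map D).trace := by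
  simp [Matrix.trace]

/-- coefficient extraction -/
lemma coeff_ext {V : Type*} [AddCommGroup V] [Module ℂ V] (n : ℕ) (c d : ℕ → V)
    (h : ∀ t : ℂ, ∑ l ∈ Finset.range n, t ^ l • c l = ∑ l ∈ Finset.range n, t ^ l • d l) :
    ∀ l < n, c l = d l := by
  intro l hl
  rw [← sub_eq_zero, ← Module.forall_dual_apply_eq_zero_iff ℂ]
  intro φ
  set p : Polynomial ℂ := ∑ l ∈ Finset.range n, Polynomial.monomial l (φ (c l - d l)) with hp
  have hp0 : p = 0 := by
    refine Polynomial.funext fun t => ?_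
    have := congrArg φ (h t)
    simp only [map_sum, map_smul, smul_eq_mul] at this
    rw [hp, Polynomial.eval_finsetSum]
    simp only [Polynomial.eval_monomial, Polynomial.eval_zero]
    simp only [map_sub, sub_mul, Finset.sum_sub_distrib]
    rw [sub_eq_zero]
    simpa only [mul_comm] using this
  have := congrArg (fun q => Polynomial.coeff q l) hp0
  simpa [hp, Polynomial.finsetSum_coeff, Polynomial.coeff_monomial, hl] using this

open Polynomial in
/-- the matrix polynomial -/
noncomputable def P (Θ W : Matrix (Fin r) (Fin r) Ω) : Polynomial (Matrix (Fin r) (Fin r) Ω) :=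
  C Θ + C W * X

open Polynomial in
lemma P_deg (Θ W : Matrix (Fin r) (Fin r) Ω) : (P Θ W).natDegree ≤ 1 := by
  unfold P; compute_degree

open Polynomial in
lemma P_pow_eval (Θ W : Matrix (Fin r) (Fin r) Ω) (n m : ℕ) (hm : n < m) (t : ℂ) :
    (Θ + t • W) ^ n = ∑ l ∈ Finset.range m, t ^ l • ((P Θ W) ^ n).coeff l := by
  have hc : ∀ a : Matrix (Fin r) (Fin r) Ω,
      Commute ((RingHom.id _) a) (algebraMap ℂ (Matrix (Fin r) (Fin r) Ω) t) :=
    fun a => (Algebra.commutes t a).symm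
  have h1 : eval₂RingHom' (RingHom.id _) _ hc (P Θ W) = Θ + t • W := by
    have hX : eval₂RingHom' (RingHom.id _) _ hc X = algebraMap ℂ (Matrix (Fin r) (Fin r) Ω) t :=
      eval₂_X _ _
    have hC : ∀ a, eval₂RingHom' (RingHom.id _) _ hc (C a) = a := fun a => eval₂_C _ _
    rw [P, map_add, map_mul, hX, hC, hC, Algebra.smul_def, Algebra.commutes]
  rw [← h1, ← map_pow]
  have hd : ((P Θ W) ^ n).natDegree < m :=
    lt_of_le_of_lt (natDegree_pow_le_of_le n (P_deg Θ W)) (by omega)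
  refine (eval₂_eq_sum_range' (RingHom.id _) hd _).trans ?_
  refine Finset.sum_congr rfl fun l _ => ?_
  rw [RingHom.id_apply, ← map_pow, Algebra.smul_def, Algebra.commutes]

/-- polynomials with even coefficients -/
def EvPol (A : DolbeaultAlgebra Ω) (p : Polynomial (Matrix (Fin r) (Fin r) Ω)) : Prop :=
  ∀ l, A.EvMat (p.coeff l)

lemma EvPol.mul {A : DolbeaultAlgebra Ω} {p q : Polynomial (Matrix (Fin r) (Fin r) Ω)}
    (hp : A.EvPol p) (hq : A.EvPol q) : A.EvPol (p * q) := by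
  intro l i j
  rw [Polynomial.coeff_mul, Matrix.sum_apply]
  exact sum_mem fun x _ => (hp x.1).mul (hq x.2) i j

lemma EvPol.derivative {A : DolbeaultAlgebra Ω} {p : Polynomial (Matrix (Fin r) (Fin r) Ω)}
    (hp : A.EvPol p) : A.EvPol (Polynomial.derivative p) := by
  intro l
  rw [Polynomial.coeff_derivative]
  refine (hp _).mul ?_
  have h : ((l : Matrix (Fin r) (Fin r) Ω) + 1) = ((l : ℂ) + 1) • 1 := by
    rw [add_smul, one_smul, ← Algebra.algebraMap_eq_smul_one, map_natCast]
  rw [h]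
  exact (EvMat.one A).smul _

lemma EvPol.C {A : DolbeaultAlgebra Ω} {M : Matrix (Fin r) (Fin r) Ω}
    (hM : A.EvMat M) : A.EvPol (Polynomial.C M) := by
  intro l
  rw [Polynomial.coeff_C]
  split_ifs
  · exact hM
  · exact EvMat.zero A

lemma EvPol.P {A : DolbeaultAlgebra Ω} {Θ W : Matrix (Fin r) (Fin r) Ω}
    (hΘ : A.EvMat Θ) (hW : A.EvMat W) : A.EvPol (P Θ W) := by
  intro l
  unfold DolbeaultAlgebra.P
  rw [Polynomial.coeff_add, Polynomial.coeff_C_mul, Polynomial.coeff_X]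
  refine EvMat.add (EvPol.C hΘ l) (hW.mul ?_)
  split_ifs
  · exact EvMat.one A
  · exact EvMat.zero A

lemma EvPol.pow {A : DolbeaultAlgebra Ω} {p : Polynomial (Matrix (Fin r) (Fin r) Ω)}
    (hp : A.EvPol p) (n : ℕ) : A.EvPol (p ^ n) := by
  induction n with
  | zero => rw [pow_zero, ← Polynomial.C_1]; exact EvPol.C (EvMat.one A)
  | succ n ih => rw [pow_succ]; exact ih.mul hp

lemma EvPol.trace_comm {A : DolbeaultAlgebra Ω} {p q : Polynomial (Matrix (Fin r) (Fin r) Ω)}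
    (hp : A.EvPol p) (hq : A.EvPol q) (l : ℕ) :
    ((p * q).coeff l).trace = ((q * p).coeff l).trace := by
  rw [Polynomial.coeff_mul, Polynomial.coeff_mul, Matrix.trace_sum, Matrix.trace_sum,
    ← Finset.Nat.sum_antidiagonal_swap]
  exact Finset.sum_congr rfl fun x _ => (hp _).trace_comm (hq _)

open Polynomial in
lemma trace_deriv (A : DolbeaultAlgebra Ω) {Θ W : Matrix (Fin r) (Fin r) Ω}
    (hΘ : A.EvMat Θ) (hW : A.EvMat W) (l m : ℕ) : ∀ j,
    (((P Θ W) ^ j * derivative ((P Θ W) ^ (m + 1))).coeff l).trace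
      = ((m + 1 : ℕ) : ℂ) • (((P Θ W) ^ (j + m) * C W).coeff l).trace := by
  have hdP : derivative (P Θ W) = C W := by simp [P]
  have hP := EvPol.P hΘ hW
  induction m with
  | zero => intro j; simp [hdP]
  | succ m ih =>
    intro j
    rw [pow_succ (P Θ W) (m + 1), derivative_mul, hdP, mul_add, coeff_add, Matrix.trace_add,
      ← mul_assoc, EvPol.trace_comm ((hP.pow j).mul (hP.pow (m+1)).derivative) hP,
      ← mul_assoc, ← pow_succ', ih, ← mul_assoc, ← pow_add,
      show j + 1 + m = j + (m + 1) by ring, Nat.cast_succ (m + 1), add_smul, one_smul]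

end DolbeaultAlgebra

open DolbeaultAlgebra

variable {Ω : Type*} [Ring Ω] [Algebra ℂ Ω]

/-- Fix `k ≥ 1` and let `a l` (for `0 ≤ l ≤ k-1`) be the coefficients of the expansion
`Tr(θ(Θ + tθ²)^(k-1)) = ∑_{l=0}^{k-1} a_l tˡ`. Then `∂̄a₀ = Tr(Θᵏ)`,
`∂̄a_l = ((k+l)/l) ∂a_(l-1)` for `1 ≤ l ≤ k-1`, and `∂a_(k-1) = 0`. -/
theorem stmt5
    (A : DolbeaultAlgebra Ω) (r : ℕ) (hr : 1 ≤ r)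
    (θ Θ : Matrix (Fin r) (Fin r) Ω)
    (hθdeg : A.MatDeg 1 0 θ) (hθpd : A.mpd θ = -(θ * θ)) (hΘ : Θ = A.mpdb θ)
    (k : ℕ) (hk : 1 ≤ k) (a : ℕ → Ω)
    (ha : ∀ t : ℂ, Matrix.trace (θ * (Θ + t • (θ * θ)) ^ (k - 1)) =
      ∑ l ∈ Finset.range k, t ^ l • a l) :
    A.pdb (a 0) = Matrix.trace (Θ ^ k) ∧
    (∀ l : ℕ, 1 ≤ l → l + 1 ≤ k →
      A.pdb (a l) = (((k : ℂ) + (l : ℂ)) / (l : ℂ)) • A.pd (a (l - 1))) ∧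
    A.pd (a (k - 1)) = 0 := by
  have hD : A.Leib A.pd := fun p q a b h => A.pd_leibniz a b h
  have hB : A.Leib A.pdb := fun p q a b h => A.pdb_leibniz a b h
  obtain ⟨n, rfl⟩ : ∃ n, k = n + 1 := ⟨k - 1, by omega⟩
  simp only [Nat.add_sub_cancel] at ha ⊢
  have hpd : θ.map A.pd = -(θ * θ) := hθpd
  have hpdb : θ.map A.pdb = Θ := hΘ.symm
  have eΘ : A.EvMat Θ := by
    intro i j
    refine Algebra.subset_adjoin ⟨1, 1, by decide, ?_⟩
    rw [hΘ]
    exact A.pdb_mem (hθdeg i j)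
  have eW : A.EvMat (θ * θ) := by
    intro i j
    rw [Matrix.mul_apply]
    exact sum_mem fun x _ => Algebra.subset_adjoin
      ⟨2, 0, by decide, A.mul_mem (hθdeg i x) (hθdeg x j)⟩
  have bW : (θ * θ).map A.pdb = Θ * θ - θ * Θ := by
    rw [hB.mat_odd hθdeg, hpdb]
  have dW : (θ * θ).map A.pd = 0 := by
    rw [hD.mat_odd hθdeg, hpd]; noncomm_ring
  have bΘ : Θ.map A.pdb = 0 := by
    ext i j; rw [hΘ]; exact A.pdb_pdb _
  have dΘ : Θ.map A.pd = Θ * θ - θ * Θ := by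
    rw [← bW]
    ext i j
    have h1 := A.pd_pdb (θ i j)
    have h2 : A.pd (θ i j) = -((θ * θ) i j) := congrFun (congrFun hpd i) j
    rw [h2, map_neg, add_neg_eq_zero] at h1
    rw [hΘ]
    exact h1
  have eX : ∀ t : ℂ, A.EvMat (Θ + t • (θ * θ)) := fun t => eΘ.add (eW.smul t)
  have mapX : ∀ (D : Ω →ₗ[ℂ] Ω) (t : ℂ), (Θ + t • (θ * θ)).map D
      = Θ.map D + t • (θ * θ).map D := by
    intro D t; ext i j; simp
  have cX : ∀ t : ℂ, (Θ + t • (θ * θ)) * θ - θ * (Θ + t • (θ * θ)) = Θ * θ - θ * Θ := by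
    intro t
    rw [add_mul, mul_add, smul_mul_assoc, mul_smul_comm, mul_assoc]; abel
  -- the two derivative formulas
  have F1 : ∀ t : ℂ, A.pd (θ * (Θ + t • (θ * θ)) ^ n).trace
      = (θ * θ * (Θ + t • (θ * θ)) ^ n).trace := by
    intro t
    have hx := hD.pow_comm (θ := θ) (eX t) 1 (by rw [mapX, dW, dΘ, cX]; simp) n
    rw [trace_map, hD.mat_odd hθdeg, hx, hpd, one_smul, mul_sub, Matrix.trace_sub,
      Matrix.trace_sub, A.trace_odd hθdeg ((eX t).pow n), ← mul_assoc θ θ, neg_mul,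
      Matrix.trace_neg]
    abel
  have F2 : ∀ t : ℂ, A.pdb (θ * (Θ + t • (θ * θ)) ^ n).trace
      = ((Θ + t • (θ * θ)) ^ (n + 1)).trace
        + t • (θ * θ * (Θ + t • (θ * θ)) ^ n).trace := by
    intro t
    have hx := hB.pow_comm (θ := θ) (eX t) t (by rw [mapX, bW, bΘ, cX]; simp) n
    rw [trace_map, hB.mat_odd hθdeg, hx, hpdb, mul_smul_comm, mul_sub, Matrix.trace_sub,
      Matrix.trace_smul, Matrix.trace_sub, A.trace_odd hθdeg ((eX t).pow n), ← mul_assoc θ θ,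
      pow_succ', add_mul, Matrix.trace_add, smul_mul_assoc, Matrix.trace_smul, smul_sub, smul_neg]
    abel
  set Q := P Θ (θ * θ) with hQ
  set g : ℕ → Ω := fun l => ((Q ^ (n + 1)).coeff l).trace with hg
  set h : ℕ → Ω := fun l => (θ * θ * (Q ^ n).coeff l).trace with hh
  have G : ∀ t : ℂ, ((Θ + t • (θ * θ)) ^ (n + 1)).trace
      = ∑ l ∈ Finset.range (n + 2), t ^ l • g l := by
    intro t
    rw [P_pow_eval Θ (θ * θ) (n + 1) (n + 2) (by omega), Matrix.trace_sum]
    simp only [Matrix.trace_smul, hg, hQ]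
  have H : ∀ t : ℂ, (θ * θ * (Θ + t • (θ * θ)) ^ n).trace
      = ∑ l ∈ Finset.range (n + 1), t ^ l • h l := by
    intro t
    rw [P_pow_eval Θ (θ * θ) n (n + 1) (by omega), Finset.mul_sum, Matrix.trace_sum]
    simp only [mul_smul_comm, Matrix.trace_smul, hh, hQ]
  have R1 : ∀ l < n + 1, A.pd (a l) = h l := by
    refine coeff_ext (n + 1) (fun l => A.pd (a l)) h fun t => ?_
    rw [← H, ← F1, ha, map_sum]
    simp only [map_smul]
  have R2 : ∀ l < n + 2, (if l < n + 1 then A.pdb (a l) else 0)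
      = g l + (if l = 0 then 0 else h (l - 1)) := by
    refine coeff_ext (n + 2) (fun l => if l < n + 1 then A.pdb (a l) else 0)
      (fun l => g l + (if l = 0 then 0 else h (l - 1))) fun t => ?_
    have e := F2 t
    rw [G, H, ha, map_sum] at e
    simp only [smul_add, Finset.sum_add_distrib]
    rw [Finset.sum_range_succ, Finset.sum_range_succ' (fun l => t ^ l • (if l = 0 then (0 : Ω) else h (l - 1)))]
    simp only [lt_irrefl, if_false, smul_zero, add_zero, if_true, Nat.add_sub_cancel,
      Nat.succ_ne_zero, pow_succ', mul_smul, ← Finset.smul_sum]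
    rw [← e]
    refine Finset.sum_congr rfl fun l hl => ?_
    rw [if_pos (Finset.mem_range.1 hl), map_smul]
  have R3 : ∀ l, ((l + 1 : ℕ) : ℂ) • g (l + 1) = ((n + 1 : ℕ) : ℂ) • h l := by
    intro l
    have e := A.trace_deriv eΘ eW l n 0
    rw [pow_zero, one_mul, zero_add, Polynomial.coeff_derivative, Polynomial.coeff_mul_C,
      ← EvMat.trace_comm eW (((EvPol.P eΘ eW).pow n) l)] at e
    have hl : ((l : Matrix (Fin r) (Fin r) Ω) + 1) = ((l + 1 : ℕ) : ℂ) • 1 := by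
      rw [← Algebra.algebraMap_eq_smul_one, map_natCast, Nat.cast_succ]
    rw [hl, mul_smul_comm, mul_one, Matrix.trace_smul] at e
    exact e
  have hn0 : ((n + 1 : ℕ) : ℂ) ≠ 0 := Nat.cast_ne_zero.2 (by omega)
  refine ⟨?_, ?_, ?_⟩
  · have e := R2 0 (by omega)
    simp only [Nat.zero_lt_succ, if_true, add_zero] at e
    rw [e]
    have e2 := G 0
    rw [Finset.sum_range_succ'] at e2
    simpa using e2.symm
  · intro l h1 h2
    obtain ⟨m, rfl⟩ : ∃ m, l = m + 1 := ⟨l - 1, by omega⟩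
    have e := R2 (m + 1) (by omega)
    rw [if_pos (by omega), if_neg (by omega), Nat.add_sub_cancel] at e
    have hm0 : ((m + 1 : ℕ) : ℂ) ≠ 0 := Nat.cast_ne_zero.2 (by omega)
    have e3 : g (m + 1) = (((n + 1 : ℕ) : ℂ) / ((m + 1 : ℕ) : ℂ)) • h m := by
      rw [div_eq_inv_mul, mul_smul, ← R3, smul_smul, inv_mul_cancel₀ hm0, one_smul]
    rw [e, e3, Nat.add_sub_cancel, R1 m (by omega), add_div, div_self hm0, add_smul, one_smul]
  · rw [R1 n (by omega)]
    have e1 : (Q ^ n).coeff n = (θ * θ) ^ n := by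
      have := Polynomial.coeff_pow_of_natDegree_le (P_deg Θ (θ * θ)) (m := n)
      rw [mul_one] at this
      rw [hQ, this]
      simp [P, Polynomial.coeff_C]
    have e2 : h n = - h n := by
      have := A.trace_odd hθdeg (eW.pow n)
      rw [show (θ * θ) ^ n * θ = θ * (θ * θ) ^ n from
        ((Commute.mul_left (Commute.refl θ) (Commute.refl θ)).pow_left n).eq, ← mul_assoc] at this
      simpa only [hh, e1] using this
    have e3 : (2 : ℂ) • h n = 0 := by
      rw [two_smul]; nth_rewrite 1 [e2]; simp
    exact (smul_eq_zero.1 e3).resolve_left two_ne_zero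
end
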